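/- For a uniformly random permutation π of S_n, let D_n = des(π) and D'_n = des(π⁻¹). Then the random vector ( (D_n − (n−1)/2)/sqrt((n+1)/12), (D'_n − (n−1)/2)/sqrt((n+1)/12) ) converges in distribution, as n → ∞, to a bivariate normal random vector with mean zero and identity covariance matrix (i.e., to the product of two independent standard Gaussians on ℝ²). -/

import Mathlib

open Finset Topology

/-- The value of `π` at (0-indexed) position `j`, or `0` if `j` is out of range. -/
def permVal {n : ℕ} (π : Equiv.Perm (Fin n)) (j : ℕ) : ℕ :=
  if h : j < n then (π ⟨j, h⟩ : ℕ) else 0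

/-- The number of descents of a permutation of `n` elements: the number of positions
`i` (0-indexed, `i < n - 1`) with `π i > π (i+1)`. -/
def des {n : ℕ} (π : Equiv.Perm (Fin n)) : ℕ :=
  ((Finset.range (n - 1)).filter (fun i => permVal π (i + 1) < permVal π i)).card

/-!
Stable sorting attaches to a word of length `n` over a `k`-letter alphabet the permutation `π` that
sorts it, and by stars and bars each `π` arises from `(k + n - 1 - des π).choose n` words. Pairs of
words over alphabets of sizes `k` and `l` whose sorting permutations are mutually inverse
correspond to multisets of size `n` of pairs of letters, so the products of these binomials for `π`
and `π⁻¹` sum to `(k * l).multichoose n` (Carlitz–Roselle–Scoville). Summing generating functions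
over `k` and `l`, and expanding the rising factorial in unsigned Stirling numbers `c(n, j)`, the
joint probability generating function of `(des π, des π⁻¹)` becomes
`∑ j, c(n, j) j!² / n!² * Aⱼ(s) Aⱼ(t) ((1 - s) (1 - t)) ^ (n - j)`, where `Aⱼ` is the generating
function of `des` on `j` elements. Its term `j = n` is the product of the marginals, and since
`c(n, j) j!² / n!² ≤ 1 / (n - j)!` the others add up to at most `exp (|1 - s| |1 - t|) - 1`, which
vanishes in the limit when `s` and `t` are within `O(n ^ (-1/2))` of `1`.

For the marginals, let `k → ∞` in a random word `w` over `k` letters: `k * des w` plus the last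
letter is a sum of `n` independent uniform letters, so that `Aₙ(exp (iθ))` is within `|θ|` of
`(exp (iθ/2) sinc (θ/2)) ^ n`. Lévy's continuity theorem concludes.
-/

section Descents

variable {n : ℕ}

/-- The descent set of a word `w₀ ⋯ wₙ`, with the descent `wᵢ > wᵢ₊₁` recorded as `i : Fin n`. -/
def descents {α : Type*} [LT α] [DecidableLT α] (w : Fin (n + 1) → α) : Finset (Fin n) :=
  {i | w i.succ < w i.castSucc}

lemma permVal_castSucc (π : Equiv.Perm (Fin (n + 1))) (i : Fin n) :
    permVal π i = π i.castSucc :=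
  dif_pos _

lemma permVal_succ (π : Equiv.Perm (Fin (n + 1))) (i : Fin n) :
    permVal π (i + 1) = π i.succ :=
  dif_pos _

lemma des_eq_card_descents (π : Equiv.Perm (Fin (n + 1))) : des π = #(descents π) := by
  rw [des, descents, card_filter, card_filter, Nat.add_sub_cancel,
    ← Fin.sum_univ_eq_sum_range (fun i ↦ if permVal π (i + 1) < permVal π i then 1 else 0)]
  simp_rw [permVal_castSucc, permVal_succ, Fin.lt_def]

lemma des_le {m : ℕ} (π : Equiv.Perm (Fin m)) : des π ≤ m - 1 :=
  (card_filter_le _ _).trans (card_range _).le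

lemma count_not_descent {m : ℕ} (π : Equiv.Perm (Fin m)) :
    Nat.count (fun i ↦ ¬ permVal π (i + 1) < permVal π i) (m - 1) = m - 1 - des π := by
  have h := card_filter_add_card_filter_not (s := range (m - 1))
    (fun i ↦ permVal π (i + 1) < permVal π i)
  rw [card_range] at h
  rw [Nat.count_eq_card_filter_range, des]
  omega

end Descents

section MonotoneWords

lemma card_fin_orderEmbedding (m M : ℕ) : Nat.card (Fin m ↪o Fin M) = M.choose m := by
  rw [Nat.card_congr Set.powersetCard.ofFinEmbEquiv, Set.powersetCard.card, Nat.card_fin]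

variable {n : ℕ} (A : ℕ → Prop) [DecidablePred A]

lemma monotone_sub_count_of_strictMono {g : Fin (n + 1) → ℕ} (hg : StrictMono g) :
    Monotone fun i ↦ (g i : ℤ) - Nat.count A i := by
  refine Fin.monotone_iff_le_succ.2 fun i ↦ ?_
  have hlt : g i.castSucc < g i.succ := hg i.castSucc_lt_succ
  simp only [Fin.val_castSucc, Fin.val_succ, Nat.count_succ]
  split_ifs <;> omega

/-- Adding to `a` the number of positions of `A` passed so far turns the chosen weak inequalities
into strict ones, so that `a` becomes an arbitrary strictly increasing sequence. -/
lemma card_strictMono_add_count (k : ℕ) :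
    Nat.card {a : Fin (n + 1) → Fin k // StrictMono fun i ↦ (a i : ℕ) + Nat.count A i} =
      (k + Nat.count A n).choose (n + 1) := by
  rw [← card_fin_orderEmbedding]
  have count_le (i : Fin (n + 1)) : Nat.count A i ≤ Nat.count A n :=
    Nat.count_monotone A (Nat.le_of_lt_succ i.2)
  have hmono (g : Fin (n + 1) ↪o Fin (k + Nat.count A n)) :=
    monotone_sub_count_of_strictMono A (Fin.val_strictMono.comp g.strictMono)
  have le_g (g : Fin (n + 1) ↪o Fin (k + Nat.count A n)) (i : Fin (n + 1)) :
      Nat.count A i ≤ g i := by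
    have h0 := hmono g (Fin.zero_le i)
    simp only [Function.comp_apply, Fin.val_zero, Nat.count_zero] at h0
    omega
  have g_lt (g : Fin (n + 1) ↪o Fin (k + Nat.count A n)) (i : Fin (n + 1)) :
      g i - Nat.count A i < k := by
    have hlast := hmono g (Fin.le_last i)
    simp only [Function.comp_apply, Fin.val_last] at hlast
    have := (g (Fin.last n)).2
    have := le_g g i
    omega
  exact Nat.card_congr
    { toFun a := OrderEmbedding.ofStrictMono
        (fun i ↦ ⟨a.1 i + Nat.count A i, add_lt_add_of_lt_of_le (a.1 i).2 (count_le i)⟩) a.2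
      invFun g := ⟨fun i ↦ ⟨g i - Nat.count A i, g_lt g i⟩, by
        simpa only [Nat.sub_add_cancel (le_g g _), Function.comp_def] using
          Fin.val_strictMono.comp g.strictMono⟩
      left_inv a := Subtype.ext <| funext fun i ↦ Fin.ext <| Nat.add_sub_cancel ..
      right_inv g := RelEmbedding.ext fun i ↦ Fin.ext <| Nat.sub_add_cancel (le_g g i) }

lemma card_fin_orderHom_fin (m M : ℕ) : Nat.card (Fin m →o Fin M) = M.multichoose m := by
  obtain _ | n := m
  · have : Unique (Fin 0 →o Fin M) :=
      ⟨⟨⟨Fin.elim0, fun i ↦ i.elim0⟩⟩, fun f ↦ OrderHom.ext _ _ (Subsingleton.elim _ _)⟩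
    simp
  rw [Nat.multichoose_eq, ← add_assoc, Nat.add_sub_cancel]
  have h := card_strictMono_add_count (n := n) (fun _ ↦ True) M
  simp only [Nat.count_true] at h
  rw [← h]
  refine Nat.card_congr
    { toFun f := ⟨f, fun i j hij ↦ add_lt_add_of_le_of_lt (f.monotone hij.le) hij⟩
      invFun a := ⟨a.1, Fin.monotone_iff_le_succ.2 fun i ↦ ?_⟩
      left_inv _ := rfl
      right_inv _ := rfl }
  have := a.2 i.castSucc_lt_succ
  simp only [Fin.val_castSucc, Fin.val_succ] at this
  exact Fin.le_def.2 (by omega)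

lemma card_fin_orderHom (m : ℕ) (α : Type*) [LinearOrder α] [Finite α] :
    Nat.card (Fin m →o α) = (Nat.card α).multichoose m := by
  have := Fintype.ofFinite α
  let e : Fin (Nat.card α) ≃o α := Fintype.orderIsoFinOfCardEq α Nat.card_eq_fintype_card.symm
  rw [← card_fin_orderHom_fin]
  exact Nat.card_congr
    { toFun f := (e.symm : α →o _).comp f
      invFun f := (e : _ →o α).comp f
      left_inv f := by ext; simp
      right_inv f := by ext; simp }

end MonotoneWords

section Sorting

variable {m n : ℕ} {α β : Type*}

lemma sort_inv_lt_sort_inv_iff [LinearOrder α] (w : Fin m → α) {i j : Fin m} (hij : i < j) :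
    (Tuple.sort w)⁻¹ i < (Tuple.sort w)⁻¹ j ↔ w i ≤ w j := by
  obtain ⟨hmono, hstable⟩ := Tuple.eq_sort_iff.1 (rfl : Tuple.sort w = Tuple.sort w)
  constructor
  · intro h
    simpa using hmono h.le
  · intro h
    by_contra hcon
    have hji : (Tuple.sort w)⁻¹ j < (Tuple.sort w)⁻¹ i :=
      lt_of_le_of_ne (not_lt.1 hcon) ((Tuple.sort w)⁻¹.injective.ne hij.ne')
    have hle : w j ≤ w i := by simpa using hmono hji.le
    have hlt := hstable _ _ hji (by simpa using le_antisymm hle h)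
    exact lt_asymm hij (by simpa using hlt)

lemma descents_sort_inv [LinearOrder α] (w : Fin (n + 1) → α) :
    descents ⇑(Tuple.sort w)⁻¹ = descents w := by
  ext i
  have hne := (Tuple.sort w)⁻¹.injective.ne i.castSucc_lt_succ.ne
  rw [descents, descents, mem_filter_univ, mem_filter_univ, ← not_le, ← not_le,
    ← sort_inv_lt_sort_inv_iff w i.castSucc_lt_succ, hne.le_iff_lt]

lemma monotone_toLex_iff [LinearOrder α] [Preorder β] (a : Fin m → α) (b : Fin m → β) :
    (Monotone fun i ↦ toLex (a i, b i)) ↔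
      Monotone a ∧ ∀ i j, i < j → a i = a j → b i ≤ b j := by
  simp only [monotone_iff_forall_lt, Prod.Lex.toLex_le_toLex]
  constructor
  · intro h
    refine ⟨fun i j hij ↦ ?_, fun i j hij heq ↦ ?_⟩
    · exact (h hij).elim le_of_lt fun h' ↦ h'.1.le
    · exact (h hij).elim (fun h' ↦ absurd heq h'.ne) And.right
  · rintro ⟨ha, hb⟩ i j hij
    exact (ha hij).lt_or_eq.imp_right fun heq ↦ ⟨heq, hb i j hij heq⟩

lemma sort_eq_sort_inv_iff [LinearOrder α] [LinearOrder β] (u : Fin m → α) (v : Fin m → β) :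
    Tuple.sort u = (Tuple.sort v)⁻¹ ↔
      Monotone fun i ↦ toLex (u ((Tuple.sort v)⁻¹ i), v i) := by
  rw [eq_comm, Tuple.eq_sort_iff, monotone_toLex_iff]
  refine and_congr_right fun _ ↦ forall₃_congr fun i j hij ↦ imp_congr_right fun _ ↦ ?_
  exact sort_inv_lt_sort_inv_iff v hij

/-- Stability breaks ties by position, so sorting by `π` makes the letters strictly increase at the
descents of `π`, and only weakly at the ascents, which the count turns into strict increase. -/
lemma sort_eq_iff_strictMono_add_count {k : ℕ} (w : Fin (n + 1) → Fin k)
    (π : Equiv.Perm (Fin (n + 1))) :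
    Tuple.sort w = π ↔ StrictMono fun i ↦
      (w (π i) : ℕ) + Nat.count (fun j ↦ ¬ permVal π (j + 1) < permVal π j) i := by
  rw [eq_comm, Tuple.eq_sort_iff', Fin.strictMono_iff_lt_succ, Fin.strictMono_iff_lt_succ]
  refine forall_congr' fun i ↦ ?_
  have hne : (π i.castSucc : ℕ) ≠ π i.succ :=
    Fin.val_injective.ne (π.injective.ne i.castSucc_lt_succ.ne)
  change toLex (w (π i.castSucc), π i.castSucc) < toLex (w (π i.succ), π i.succ) ↔ _
  rw [Prod.Lex.toLex_lt_toLex, Fin.val_succ, Fin.val_castSucc, Nat.count_succ, permVal_succ,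
    permVal_castSucc]
  simp only [Fin.lt_def, Fin.ext_iff]
  split_ifs <;> omega

/-- The words of length `m` over a `k`-letter alphabet with stable sorting permutation `π`. -/
def wordsSortedBy {m : ℕ} (k : ℕ) (π : Equiv.Perm (Fin m)) : Finset (Fin m → Fin k) :=
  {w | Tuple.sort w = π}

lemma card_wordsSortedBy (k : ℕ) (π : Equiv.Perm (Fin m)) :
    #(wordsSortedBy k π) = (k + (m - 1 - des π)).choose m := by
  obtain _ | n := m
  · simp [wordsSortedBy, Subsingleton.elim _ π]
  have h := card_strictMono_add_count (n := n) (fun j ↦ ¬ permVal π (j + 1) < permVal π j) k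
  have hcount := count_not_descent π
  rw [Nat.add_sub_cancel] at hcount
  rw [Nat.add_sub_cancel, ← hcount, ← h, wordsSortedBy, ← Fintype.card_subtype,
    ← Nat.card_eq_fintype_card]
  exact Nat.card_congr <| (π.arrowCongr (Equiv.refl _)).symm.subtypeEquiv fun w ↦
    sort_eq_iff_strictMono_add_count w π

lemma sum_card_wordsSortedBy_mul {R : Type*} [CommSemiring R] (k : ℕ)
    (g : Equiv.Perm (Fin m) → R) :
    ∑ π, (#(wordsSortedBy k π) : R) * g π = ∑ w : Fin m → Fin k, g (Tuple.sort w) := by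
  rw [← sum_fiberwise univ Tuple.sort]
  refine sum_congr rfl fun π _ ↦ ?_
  rw [sum_congr rfl fun w hw ↦ congrArg g (mem_filter.1 hw).2, sum_const, nsmul_eq_mul]
  rfl

lemma sum_card_wordsSortedBy (m k : ℕ) :
    ∑ π : Equiv.Perm (Fin m), #(wordsSortedBy k π) = k ^ m := by
  simpa using sum_card_wordsSortedBy_mul (R := ℕ) (m := m) k fun _ ↦ 1

/-- A pair `(u, v)` of words with mutually inverse sorting permutations amounts, after reordering
`u`, to a weakly increasing word in the lexicographically ordered letters `(uᵢ, vᵢ)`. -/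
lemma sum_card_wordsSortedBy_mul_card_wordsSortedBy_inv (m k l : ℕ) :
    ∑ π : Equiv.Perm (Fin m), #(wordsSortedBy k π) * #(wordsSortedBy l π⁻¹) =
      (k * l).multichoose m := by
  calc
    _ = ∑ π : Equiv.Perm (Fin m), #(wordsSortedBy l π) * #(wordsSortedBy k π⁻¹) := by
      rw [← Equiv.sum_comp (Equiv.inv _)]
      simp only [Equiv.inv_apply, inv_inv, mul_comm]
    _ = ∑ v : Fin m → Fin l, #(wordsSortedBy k (Tuple.sort v)⁻¹) :=
      sum_card_wordsSortedBy_mul (R := ℕ) l fun π ↦ #(wordsSortedBy k π⁻¹)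
    _ = Nat.card (Σ v : Fin m → Fin l, {u : Fin m → Fin k // Tuple.sort u = (Tuple.sort v)⁻¹}) := by
      simp [wordsSortedBy, Fintype.card_subtype]
    _ = Nat.card (Σ v : Fin m → Fin l,
          {a : Fin m → Fin k // Monotone fun i ↦ toLex (a i, v i)}) :=
      Nat.card_congr <| Equiv.sigmaCongrRight fun v ↦
        ((Tuple.sort v).arrowCongr (Equiv.refl _)).subtypeEquiv fun u ↦ sort_eq_sort_inv_iff u v
    _ = Nat.card (Fin m →o Fin k ×ₗ Fin l) := Nat.card_congr
      { toFun p := ⟨fun i ↦ toLex (p.2.1 i, p.1 i), p.2.2⟩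
        invFun F := ⟨fun i ↦ (ofLex (F i)).2, fun i ↦ (ofLex (F i)).1, F.monotone⟩
        left_inv _ := rfl
        right_inv _ := rfl }
    _ = (k * l).multichoose m := by
      rw [card_fin_orderHom, Nat.card_congr ofLex, Nat.card_prod, Nat.card_fin, Nat.card_fin]

end Sorting

section CyclicIncrements

variable {R : Type*} [CommSemiring R] (z : R)

lemma sum_pow_mul_ite_add (k : ℕ) (u : Fin k) :
    ∑ v : Fin k, z ^ (k * (if v < u then 1 else 0) + (v : ℕ)) =
      z ^ (u : ℕ) * ∑ j ∈ range k, z ^ j := by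
  obtain ⟨d, hd⟩ := Nat.exists_eq_add_of_le u.2.le
  have hbelow : ∑ v ∈ range u, z ^ (k * (if v < (u : ℕ) then 1 else 0) + v) =
      z ^ (u : ℕ) * ∑ x ∈ range u, z ^ (d + x) := by
    rw [mul_sum]
    refine sum_congr rfl fun v hv ↦ ?_
    rw [if_pos (mem_range.1 hv), mul_one, ← pow_add, ← add_assoc, ← hd]
  have habove : ∑ x ∈ range d, z ^ (k * (if (u : ℕ) + x < u then 1 else 0) + (u + x)) =
      z ^ (u : ℕ) * ∑ x ∈ range d, z ^ x := by
    simp [mul_sum, pow_add]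
  simp only [Fin.lt_def]
  rw [Fin.sum_univ_eq_sum_range (fun v ↦ z ^ (k * (if v < (u : ℕ) then 1 else 0) + v)),
    show range k = range (u + d) by rw [← hd], sum_range_add, hbelow, habove,
    add_comm (u : ℕ) d, sum_range_add, mul_add, add_comm]

lemma card_descents_snoc {α : Type*} [LT α] [DecidableLT α] {n : ℕ} (w : Fin (n + 1) → α) (v : α) :
    #(descents (Fin.snoc w v : Fin (n + 2) → α)) =
      #(descents w) + if v < w (Fin.last n) then 1 else 0 := by
  simp only [descents, card_filter, Fin.sum_univ_castSucc, Fin.succ_castSucc, Fin.snoc_castSucc,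
    Fin.succ_last, Fin.snoc_last]

/-- `k * #(descents w) + w (last n)` is the sum of the first letter of `w` and of its cyclic
increments modulo `k`, which are independent and uniform for a random word. -/
lemma sum_pow_card_descents_add_last (n k : ℕ) :
    ∑ w : Fin (n + 1) → Fin k, z ^ (k * #(descents w) + w (Fin.last n)) =
      (∑ j ∈ range k, z ^ j) ^ (n + 1) := by
  induction n with
  | zero =>
    rw [← (Equiv.funUnique (Fin 1) (Fin k)).symm.sum_comp]
    simp [descents, Fin.sum_univ_eq_sum_range (fun v ↦ z ^ v)]
  | succ n ih =>
    rw [← (Fin.snocEquiv fun _ ↦ Fin k).sum_comp, Fintype.sum_prod_type_right, pow_succ, ← ih,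
      sum_mul]
    refine sum_congr rfl fun w _ ↦ ?_
    rw [pow_add, mul_assoc, ← sum_pow_mul_ite_add, mul_sum]
    refine sum_congr rfl fun v _ ↦ ?_
    simp only [Fin.snocEquiv, Equiv.coe_fn_mk, card_descents_snoc, Fin.snoc_last]
    ring

end CyclicIncrements

section GeneratingFunctions

open Nat (stirlingFirst)
open scoped Nat

variable {m : ℕ} {s t : ℂ}

/-- The probability generating function of `des π` for a uniformly random `π : Perm (Fin m)`. -/
noncomputable def desPGF (m : ℕ) (s : ℂ) : ℂ :=
  (∑ π : Equiv.Perm (Fin m), s ^ des π) / m !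

/-- The joint probability generating function of `des π` and `des π⁻¹` for a uniformly random
`π : Perm (Fin m)`. -/
noncomputable def jointDesPGF (m : ℕ) (s t : ℂ) : ℂ :=
  (∑ π : Equiv.Perm (Fin m), s ^ des π * t ^ des π⁻¹) / m !

lemma differentiable_desPGF (m : ℕ) : Differentiable ℂ (desPGF m) := by
  unfold desPGF
  fun_prop

lemma norm_desPGF_le_one (m : ℕ) (hs : ‖s‖ ≤ 1) : ‖desPGF m s‖ ≤ 1 := by
  rw [desPGF, norm_div, Complex.norm_natCast, div_le_one (by positivity)]
  calc ‖∑ π : Equiv.Perm (Fin m), s ^ des π‖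
      ≤ ∑ π : Equiv.Perm (Fin m), 1 := norm_sum_le_of_le _ fun π _ ↦ by
        simpa using pow_le_one₀ (norm_nonneg s) hs
    _ = m ! := by simp [Fintype.card_perm]

lemma sum_mul_eq_sum_mul_of_hasSum {ι κ R : Type*} [CommSemiring R] [TopologicalSpace R]
    [IsTopologicalSemiring R] [T2Space R] {I : Finset ι} {J : Finset κ}
    {a b : ι → ℕ → R} {c d : κ → ℕ → R} {A B : ι → R} {C D : κ → R}
    (ha : ∀ i, HasSum (a i) (A i)) (hb : ∀ i, HasSum (b i) (B i))
    (hc : ∀ j, HasSum (c j) (C j)) (hd : ∀ j, HasSum (d j) (D j))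
    (h : ∀ k l, ∑ i ∈ I, a i k * b i l = ∑ j ∈ J, c j k * d j l) :
    ∑ i ∈ I, A i * B i = ∑ j ∈ J, C j * D j := by
  have hrow (k : ℕ) : ∑ i ∈ I, a i k * B i = ∑ j ∈ J, c j k * D j := by
    refine (hasSum_sum fun i _ ↦ (hb i).mul_left (a i k)).unique ?_
    simpa only [h] using hasSum_sum fun j _ ↦ (hd j).mul_left (c j k)
  refine (hasSum_sum fun i _ ↦ (ha i).mul_right (B i)).unique ?_
  simpa only [hrow] using hasSum_sum fun j _ ↦ (hc j).mul_right (D j)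

lemma hasSum_choose_add_sub_mul_pow {d : ℕ} (hd : d ≤ m) (hs : ‖s‖ < 1) :
    HasSum (fun k ↦ ((k + (m - d)).choose m : ℂ) * s ^ k) (s ^ d / (1 - s) ^ (m + 1)) := by
  have hvanish : ∑ k ∈ range d, ((k + (m - d)).choose m : ℂ) * s ^ k = 0 :=
    sum_eq_zero fun k hk ↦ by
      rw [Nat.choose_eq_zero_of_lt (by have := mem_range.1 hk; omega), Nat.cast_zero, zero_mul]
  rw [← hasSum_nat_add_iff' d, hvanish, sub_zero, ← mul_one_div]
  refine ((hasSum_choose_mul_geometric_of_norm_lt_one m hs).mul_left (s ^ d)).congr_fun fun k ↦ ?_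
  rw [add_assoc, Nat.add_sub_cancel' hd, pow_add]
  ring

lemma hasSum_card_wordsSortedBy_mul_pow (π : Equiv.Perm (Fin m)) (hs : ‖s‖ < 1) :
    HasSum (fun k ↦ (#(wordsSortedBy (k + 1) π) : ℂ) * s ^ k)
      (s ^ des π / (1 - s) ^ (m + 1)) := by
  have hdes := des_le π
  convert hasSum_choose_add_sub_mul_pow (hdes.trans (m.sub_le 1)) hs using 4 with k
  rw [card_wordsSortedBy]
  obtain _ | n := m
  · simp
  · congr 1
    omega

lemma hasSum_succ_pow_mul_pow (m : ℕ) (hs : ‖s‖ < 1) :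
    HasSum (fun k : ℕ ↦ ((k : ℂ) + 1) ^ m * s ^ k) (m ! * desPGF m s / (1 - s) ^ (m + 1)) := by
  rw [desPGF, mul_div_cancel₀ _ (Nat.cast_ne_zero.2 m.factorial_ne_zero), sum_div]
  convert hasSum_sum fun (π : Equiv.Perm (Fin m)) (_ : π ∈ univ) ↦
    hasSum_card_wordsSortedBy_mul_pow π hs with k
  rw [← sum_mul, ← Nat.cast_sum, sum_card_wordsSortedBy, Nat.cast_pow, Nat.cast_succ]

lemma ascFactorial_eq_sum_stirlingFirst (m x : ℕ) :
    x.ascFactorial m = ∑ j ∈ range (m + 1), stirlingFirst m j * x ^ j := by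
  induction m with
  | zero => simp
  | succ m ih =>
    have hzero : m * stirlingFirst m 0 = 0 := by cases m <;> simp
    have hshift : ∑ j ∈ range (m + 1), m * stirlingFirst m (j + 1) * x ^ (j + 1) =
        m * ∑ j ∈ range (m + 1), stirlingFirst m j * x ^ j := by
      rw [sum_range_succ, Nat.stirlingFirst_eq_zero_of_lt m.lt_succ_self, sum_range_succ',
        mul_add, mul_sum, ← mul_assoc m (stirlingFirst m 0), hzero]
      simp only [mul_assoc, mul_zero, zero_mul]
    have hpow : ∑ j ∈ range (m + 1), stirlingFirst m j * x ^ (j + 1) =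
        x * ∑ j ∈ range (m + 1), stirlingFirst m j * x ^ j := by
      rw [mul_sum]
      exact sum_congr rfl fun j _ ↦ by ring
    rw [Nat.ascFactorial_succ, ih, sum_range_succ' _ (m + 1), Nat.stirlingFirst_succ_zero,
      zero_mul, add_zero]
    simp only [Nat.stirlingFirst_succ_succ, add_mul, sum_add_distrib]
    rw [hshift, hpow, add_comm]

lemma sum_card_wordsSortedBy_mul_inv_eq_sum_stirlingFirst (m k l : ℕ) :
    ∑ π : Equiv.Perm (Fin m), (#(wordsSortedBy k π) : ℂ) * #(wordsSortedBy l π⁻¹) =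
      ∑ j ∈ range (m + 1), (stirlingFirst m j / m ! : ℂ) * (k : ℂ) ^ j * (l : ℂ) ^ j := by
  have h : m ! * ∑ π : Equiv.Perm (Fin m), #(wordsSortedBy k π) * #(wordsSortedBy l π⁻¹) =
      ∑ j ∈ range (m + 1), stirlingFirst m j * (k * l) ^ j := by
    rw [sum_card_wordsSortedBy_mul_card_wordsSortedBy_inv, Nat.multichoose_eq,
      ← Nat.ascFactorial_eq_factorial_mul_choose', ascFactorial_eq_sum_stirlingFirst]
  have hfact : (m ! : ℂ) ≠ 0 := Nat.cast_ne_zero.2 m.factorial_ne_zero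
  rw [← mul_right_inj' hfact, mul_sum (range _)]
  convert congrArg (Nat.cast (R := ℂ)) h using 1
  · push_cast
    rfl
  · push_cast
    exact sum_congr rfl fun j _ ↦ by rw [mul_pow]; field_simp

lemma jointDesPGF_eq_sum_of_norm_lt_one (m : ℕ) (hs : ‖s‖ < 1) (ht : ‖t‖ < 1) :
    jointDesPGF m s t = ∑ j ∈ range (m + 1), (stirlingFirst m j * j ! ^ 2 / m ! ^ 2 : ℂ) *
      (desPGF j s * desPGF j t * ((1 - s) * (1 - t)) ^ (m - j)) := by
  have h := sum_mul_eq_sum_mul_of_hasSum (I := univ) (J := range (m + 1))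
    (fun π : Equiv.Perm (Fin m) ↦ hasSum_card_wordsSortedBy_mul_pow π hs)
    (fun π ↦ hasSum_card_wordsSortedBy_mul_pow π⁻¹ ht)
    (fun j ↦ (hasSum_succ_pow_mul_pow j hs).mul_left (stirlingFirst m j / m ! : ℂ))
    (fun j ↦ hasSum_succ_pow_mul_pow j ht) fun k l ↦ by
      have := sum_card_wordsSortedBy_mul_inv_eq_sum_stirlingFirst m (k + 1) (l + 1)
      convert congrArg (· * (s ^ k * t ^ l)) this using 1 <;>
      · rw [sum_mul]
        push_cast
        exact sum_congr rfl fun _ _ ↦ by ring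
  have hfact : (m ! : ℂ) ≠ 0 := Nat.cast_ne_zero.2 m.factorial_ne_zero
  have hne {u : ℂ} (hu : ‖u‖ < 1) : 1 - u ≠ 0 :=
    sub_ne_zero.2 fun h1 ↦ by simp [← h1] at hu
  have hs1 := hne hs
  have ht1 := hne ht
  calc jointDesPGF m s t
      = (∑ π : Equiv.Perm (Fin m),
          s ^ des π / (1 - s) ^ (m + 1) * (t ^ des π⁻¹ / (1 - t) ^ (m + 1))) *
        (((1 - s) * (1 - t)) ^ (m + 1) / m !) := by
        rw [jointDesPGF, sum_mul, sum_div]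
        exact sum_congr rfl fun π _ ↦ by rw [mul_pow]; field_simp
    _ = _ := by
        rw [h, sum_mul]
        refine sum_congr rfl fun j hj ↦ ?_
        obtain ⟨d, rfl⟩ := Nat.exists_eq_add_of_le (Nat.lt_succ_iff.1 (mem_range.1 hj))
        rw [Nat.add_sub_cancel_left, add_right_comm, pow_add _ (j + 1), mul_pow _ _ (j + 1)]
        field_simp

lemma eq_of_differentiable_of_forall_norm_lt_one {f g : ℂ → ℂ} (hf : Differentiable ℂ f)
    (hg : Differentiable ℂ g) (h : ∀ z, ‖z‖ < 1 → f z = g z) (z : ℂ) : f z = g z := by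
  refine congrFun (AnalyticOnNhd.eq_of_eventuallyEq (z₀ := 0) (fun _ _ ↦ hf.analyticAt _)
    (fun _ _ ↦ hg.analyticAt _) ?_) z
  filter_upwards [Metric.ball_mem_nhds 0 one_pos] with z hz
  exact h z (mem_ball_zero_iff.1 hz)

lemma jointDesPGF_eq_sum (m : ℕ) (s t : ℂ) :
    jointDesPGF m s t = ∑ j ∈ range (m + 1), (stirlingFirst m j * j ! ^ 2 / m ! ^ 2 : ℂ) *
      (desPGF j s * desPGF j t * ((1 - s) * (1 - t)) ^ (m - j)) := by
  have hdes := differentiable_desPGF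
  have hleft (t : ℂ) : Differentiable ℂ fun s ↦ jointDesPGF m s t := by
    unfold jointDesPGF
    fun_prop
  have hright (s : ℂ) : Differentiable ℂ (jointDesPGF m s) := by
    unfold jointDesPGF
    fun_prop
  revert s
  refine eq_of_differentiable_of_forall_norm_lt_one (hleft t) (by fun_prop) fun s hs ↦ ?_
  revert t
  exact eq_of_differentiable_of_forall_norm_lt_one (hright s) (by fun_prop) fun t ht ↦
    jointDesPGF_eq_sum_of_norm_lt_one m hs ht

lemma stirlingFirst_mul_factorial_le :
    ∀ j d : ℕ, stirlingFirst (j + d) j * j ! ^ 2 * d ! ≤ (j + d)! ^ 2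
  | 0, 0 => by simp
  | 0, d + 1 => by simp
  | j + 1, 0 => by simp [Nat.stirlingFirst_self]
  | j + 1, d + 1 => by
    have h1 := stirlingFirst_mul_factorial_le (j + 1) d
    have h2 := stirlingFirst_mul_factorial_le j (d + 1)
    have hidx : j + (d + 1) = j + 1 + d := by ring
    rw [hidx] at h2
    calc stirlingFirst (j + 1 + d + 1) (j + 1) * (j + 1)! ^ 2 * (d + 1)!
        = (j + 1 + d) * (d + 1) * (stirlingFirst (j + 1 + d) (j + 1) * (j + 1)! ^ 2 * d !) +
          (j + 1) ^ 2 * (stirlingFirst (j + 1 + d) j * j ! ^ 2 * (d + 1)!) := by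
          rw [Nat.stirlingFirst_succ_succ, Nat.factorial_succ j, Nat.factorial_succ d]
          ring
      _ ≤ (j + 1 + d) * (d + 1) * (j + 1 + d)! ^ 2 + (j + 1) ^ 2 * (j + 1 + d)! ^ 2 := by gcongr
      _ = ((j + 1 + d) * (d + 1) + (j + 1) ^ 2) * (j + 1 + d)! ^ 2 := by ring
      _ ≤ (j + 1 + d + 1) ^ 2 * (j + 1 + d)! ^ 2 := by
          gcongr
          nlinarith
      _ = (j + 1 + d + 1)! ^ 2 := by rw [Nat.factorial_succ (j + 1 + d), mul_pow]

lemma norm_jointDesPGF_sub_mul_le (m : ℕ) (hs : ‖s‖ ≤ 1) (ht : ‖t‖ ≤ 1) :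
    ‖jointDesPGF m s t - desPGF m s * desPGF m t‖ ≤ Real.exp (‖1 - s‖ * ‖1 - t‖) - 1 := by
  set x := ‖1 - s‖ * ‖1 - t‖ with hx
  have hfact : (m ! : ℂ) ≠ 0 := Nat.cast_ne_zero.2 m.factorial_ne_zero
  have hterm : ∀ j ∈ range m, ‖(stirlingFirst m j * j ! ^ 2 / m ! ^ 2 : ℂ) *
      (desPGF j s * desPGF j t * ((1 - s) * (1 - t)) ^ (m - j))‖ ≤ x ^ (m - j) / (m - j)! := by
    intro j hj
    obtain ⟨d, rfl⟩ := Nat.exists_eq_add_of_le (mem_range.1 hj).le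
    rw [Nat.add_sub_cancel_left]
    have hcoeff : ‖(stirlingFirst (j + d) j * j ! ^ 2 / (j + d)! ^ 2 : ℂ)‖ ≤ 1 / (d ! : ℝ) := by
      simp only [norm_div, norm_mul, norm_pow, Complex.norm_natCast]
      rw [div_le_div_iff₀ (by positivity) (by positivity), one_mul]
      exact_mod_cast stirlingFirst_mul_factorial_le j d
    rw [norm_mul, norm_mul, norm_mul, norm_pow, norm_mul, ← hx]
    calc _ ≤ 1 / (d ! : ℝ) * (1 * 1 * x ^ d) := by
          gcongr
          · exact norm_desPGF_le_one j hs
          · exact norm_desPGF_le_one j ht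
      _ = x ^ d / d ! := by ring
  rw [jointDesPGF_eq_sum, sum_range_succ, Nat.stirlingFirst_self, Nat.sub_self, pow_zero,
    mul_one, Nat.cast_one, one_mul, div_self (pow_ne_zero 2 hfact), one_mul, add_sub_cancel_right]
  calc _ ≤ ∑ j ∈ range m, x ^ (m - j) / (m - j)! := norm_sum_le_of_le _ hterm
    _ = (∑ j ∈ range (m + 1), x ^ j / j !) - 1 := by
      rw [← sum_flip, sum_range_succ, Nat.sub_self]
      simp
    _ ≤ Real.exp x - 1 := sub_le_sub_right (Real.sum_le_exp_of_nonneg (by positivity) _) 1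

end GeneratingFunctions

section Marginals

open Filter
open scoped Nat

lemma tendsto_choose_add_div_pow (c m : ℕ) :
    Tendsto (fun k : ℕ ↦ ((k + c).choose m : ℂ) / (k : ℂ) ^ m) atTop (𝓝 (1 / m !)) := by
  have hadd : Asymptotics.IsEquivalent atTop (fun k : ℕ ↦ ((k + c : ℕ) : ℝ)) fun k ↦ k := by
    refine (Asymptotics.isEquivalent_iff_tendsto_one ?_).2 ?_
    · filter_upwards [eventually_gt_atTop 0] with k hk
      exact Nat.cast_ne_zero.2 hk.ne'
    · simpa [Pi.div_def, add_comm] using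
        tendsto_add_mul_div_add_mul_atTop_nhds (c : ℝ) 0 1 one_ne_zero
  have hreal : Tendsto (fun k : ℕ ↦ ((k + c).choose m : ℝ) / (k : ℝ) ^ m) atTop
      (𝓝 (1 / m !)) := by
    have hequiv := ((isEquivalent_choose m).comp_tendsto (tendsto_add_atTop_nat c)).trans
      ((hadd.pow m).div Asymptotics.IsEquivalent.refl)
    refine ((hequiv.div (v := fun k : ℕ ↦ (k : ℝ) ^ m)
      Asymptotics.IsEquivalent.refl).tendsto_nhds_iff).2 (tendsto_const_nhds.congr' ?_)
    filter_upwards [eventually_gt_atTop 0] with k hk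
    simp only [Pi.div_apply, Pi.pow_apply]
    field_simp
  simpa [Function.comp_def] using (Complex.continuous_ofReal.tendsto _).comp hreal

lemma tendsto_sum_sort_div_pow {m : ℕ} (g : Equiv.Perm (Fin m) → ℂ) :
    Tendsto (fun k : ℕ ↦ (∑ w : Fin m → Fin k, g (Tuple.sort w)) / (k : ℂ) ^ m) atTop
      (𝓝 ((∑ π, g π) / m !)) := by
  simp_rw [← sum_card_wordsSortedBy_mul, card_wordsSortedBy, sum_div, mul_div_right_comm]
  refine tendsto_finsetSum _ fun π _ ↦ ?_
  convert (tendsto_choose_add_div_pow (m - 1 - des π) m).mul_const (g π) using 2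
  ring

lemma tendsto_sum_pow_card_descents_div_pow (n : ℕ) (s : ℂ) :
    Tendsto (fun k : ℕ ↦ (∑ w : Fin (n + 1) → Fin k, s ^ #(descents w)) / (k : ℂ) ^ (n + 1)) atTop
      (𝓝 (desPGF (n + 1) s)) := by
  have h := tendsto_sum_sort_div_pow fun π : Equiv.Perm (Fin (n + 1)) ↦ s ^ des π⁻¹
  simp only [des_eq_card_descents, descents_sort_inv] at h
  rw [desPGF, ← Equiv.sum_comp (Equiv.inv _)]
  simpa only [des_eq_card_descents, Equiv.inv_apply] using h

lemma tendsto_sum_cexp_div_pow_div {z : ℂ} (hz : z ≠ 0) :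
    Tendsto (fun k : ℕ ↦ (∑ j ∈ range k, Complex.exp (z / k) ^ j) / k) atTop
      (𝓝 ((Complex.exp z - 1) / z)) := by
  have hstep : Tendsto (fun k : ℕ ↦ (k : ℂ) * (Complex.exp (z / k) - 1)) atTop (𝓝 z) := by
    have hslope := hasDerivAt_iff_tendsto_slope.1 (Complex.hasDerivAt_exp 0)
    have hdiv : Tendsto (fun k : ℕ ↦ z / k) atTop (𝓝[≠] 0) := by
      refine tendsto_nhdsWithin_iff.2 ⟨tendsto_const_div_atTop_nhds_zero_nat z, ?_⟩
      filter_upwards [eventually_gt_atTop 0] with k hk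
      exact div_ne_zero hz (Nat.cast_ne_zero.2 hk.ne')
    have h := (hslope.comp hdiv).const_mul z
    rw [Complex.exp_zero, mul_one] at h
    refine h.congr fun k ↦ ?_
    simp only [Function.comp_apply, slope_def_field, sub_zero, Complex.exp_zero]
    field_simp
  refine (tendsto_const_nhds.div hstep hz).congr' ?_
  filter_upwards [hstep.eventually_ne hz, eventually_gt_atTop 0] with k hk0 hk
  have hne : Complex.exp (z / k) ≠ 1 := fun h ↦ hk0 (by rw [h, sub_self, mul_zero])
  rw [Pi.div_apply, geom_sum_eq hne, ← Complex.exp_nat_mul,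
    mul_div_cancel₀ z (Nat.cast_ne_zero.2 hk.ne'), div_div, mul_comm (k : ℂ)]

lemma cexp_mul_I_sub_one_div_eq {θ : ℝ} (hθ : θ ≠ 0) :
    (Complex.exp (θ * Complex.I) - 1) / (θ * Complex.I) =
      Complex.exp ((θ / 2 : ℝ) * Complex.I) * Real.sinc (θ / 2) := by
  have hθ' : (θ : ℂ) ≠ 0 := Complex.ofReal_ne_zero.2 hθ
  have hsq : Complex.exp (θ * Complex.I) = Complex.exp (θ / 2 * Complex.I) ^ 2 := by
    rw [← Complex.exp_nat_mul]
    congr 1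
    push_cast
    ring
  rw [Real.sinc_of_ne_zero (div_ne_zero hθ two_ne_zero), hsq]
  push_cast
  rw [Complex.sin, neg_mul, Complex.exp_neg]
  have hexp := Complex.exp_ne_zero (θ / 2 * Complex.I)
  generalize Complex.exp (θ / 2 * Complex.I) = a at hexp ⊢
  field_simp
  linear_combination (a ^ 2 - 1) * Complex.I_sq

lemma norm_cexp_mul_I_sub_one_le (θ : ℝ) : ‖Complex.exp (θ * Complex.I) - 1‖ ≤ |θ| := by
  rw [mul_comm]
  exact Real.norm_exp_I_mul_ofReal_sub_one_le

/-- With `s = exp (iθ)` and `z = exp (iθ/k)`, replacing `s ^ #(descents w)` by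
`z ^ (k * #(descents w) + w (last n))` costs at most `|θ|` in each term. -/
lemma norm_sum_pow_card_descents_div_pow_sub_le (n : ℕ) (θ : ℝ) {k : ℕ} (hk : 0 < k) :
    ‖(∑ w : Fin (n + 1) → Fin k, Complex.exp (θ * Complex.I) ^ #(descents w)) / (k : ℂ) ^ (n + 1) -
      ((∑ j ∈ range k, Complex.exp (θ * Complex.I / k) ^ j) / k) ^ (n + 1)‖ ≤ |θ| := by
  have hkC : (k : ℂ) ≠ 0 := Nat.cast_ne_zero.2 hk.ne'
  have hkR : (0 : ℝ) < k := Nat.cast_pos.2 hk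
  have hroot : Complex.exp (θ * Complex.I / k) ^ k = Complex.exp (θ * Complex.I) := by
    rw [← Complex.exp_nat_mul, mul_div_cancel₀ _ hkC]
  have hlast (v : Fin k) : ‖1 - Complex.exp (θ * Complex.I / k) ^ (v : ℕ)‖ ≤ |θ| := by
    have harg : Complex.exp (θ * Complex.I / k) ^ (v : ℕ) =
        Complex.exp ((v / k * θ : ℝ) * Complex.I) := by
      rw [← Complex.exp_nat_mul]
      congr 1
      push_cast
      ring
    have hvk : |(v / k : ℝ)| ≤ 1 := by
      rw [abs_of_nonneg (by positivity), div_le_one hkR]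
      exact_mod_cast v.2.le
    rw [harg, norm_sub_rev]
    refine (norm_cexp_mul_I_sub_one_le _).trans ?_
    rw [abs_mul]
    exact mul_le_of_le_one_left (abs_nonneg θ) hvk
  have hword (w : Fin (n + 1) → Fin k) : ‖Complex.exp (θ * Complex.I) ^ #(descents w) -
      Complex.exp (θ * Complex.I / k) ^ (k * #(descents w) + w (Fin.last n))‖ ≤ |θ| := by
    rw [pow_add, pow_mul, hroot, ← mul_one_sub, norm_mul, norm_pow, Complex.norm_exp_ofReal_mul_I,
      one_pow, one_mul]
    exact hlast _
  rw [div_pow, ← sum_pow_card_descents_add_last, ← sub_div, ← sum_sub_distrib, norm_div, norm_pow,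
    Complex.norm_natCast, div_le_iff₀ (by positivity)]
  refine (norm_sum_le_of_le _ fun w _ ↦ hword w).trans_eq ?_
  simp [mul_comm]

lemma norm_desPGF_cexp_sub_pow_le (m : ℕ) (θ : ℝ) :
    ‖desPGF m (Complex.exp (θ * Complex.I)) -
      (Complex.exp ((θ / 2 : ℝ) * Complex.I) * Real.sinc (θ / 2)) ^ m‖ ≤ |θ| := by
  obtain _ | n := m
  · simp [desPGF, des]
  obtain rfl | hθ := eq_or_ne θ 0
  · have hfact : ((n + 1)! : ℂ) ≠ 0 := Nat.cast_ne_zero.2 (n + 1).factorial_ne_zero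
    simp [desPGF, Fintype.card_perm, div_self hfact]
  have hgeom := tendsto_sum_cexp_div_pow_div
    (mul_ne_zero (Complex.ofReal_ne_zero.2 hθ) Complex.I_ne_zero)
  rw [cexp_mul_I_sub_one_div_eq hθ] at hgeom
  refine le_of_tendsto
    ((tendsto_sum_pow_card_descents_div_pow n _).sub (hgeom.pow (n + 1))).norm ?_
  filter_upwards [eventually_gt_atTop 0] with k hk
  exact norm_sum_pow_card_descents_div_pow_sub_le n θ hk

end Marginals

section CharacteristicFunctions

open Filter
open scoped Nat

lemma norm_jointDesPGF_cexp_sub_pow_mul_pow_le (m : ℕ) (θ η : ℝ) :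
    ‖jointDesPGF m (Complex.exp (θ * Complex.I)) (Complex.exp (η * Complex.I)) -
      (Complex.exp ((θ / 2 : ℝ) * Complex.I) * Real.sinc (θ / 2)) ^ m *
        (Complex.exp ((η / 2 : ℝ) * Complex.I) * Real.sinc (η / 2)) ^ m‖ ≤
      Real.exp (|θ| * |η|) - 1 + (|θ| + |η|) := by
  set s := Complex.exp (θ * Complex.I)
  set t := Complex.exp (η * Complex.I)
  set a := (Complex.exp ((θ / 2 : ℝ) * Complex.I) * Real.sinc (θ / 2)) ^ m with ha
  set b := (Complex.exp ((η / 2 : ℝ) * Complex.I) * Real.sinc (η / 2)) ^ m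
  have hnorm (x : ℝ) : ‖Complex.exp (x * Complex.I)‖ ≤ 1 := (Complex.norm_exp_ofReal_mul_I x).le
  have ha_le : ‖a‖ ≤ 1 := by
    rw [ha, norm_pow, norm_mul, Complex.norm_exp_ofReal_mul_I, one_mul, Complex.norm_real]
    exact pow_le_one₀ (norm_nonneg _) (Real.abs_sinc_le_one _)
  have hjoint : ‖jointDesPGF m s t - desPGF m s * desPGF m t‖ ≤ Real.exp (|θ| * |η|) - 1 := by
    refine (norm_jointDesPGF_sub_mul_le m (hnorm θ) (hnorm η)).trans ?_
    rw [norm_sub_rev 1 s, norm_sub_rev 1 t]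
    gcongr
    exacts [norm_cexp_mul_I_sub_one_le θ, norm_cexp_mul_I_sub_one_le η]
  calc ‖jointDesPGF m s t - a * b‖
      = ‖(jointDesPGF m s t - desPGF m s * desPGF m t) +
          ((desPGF m s - a) * desPGF m t + a * (desPGF m t - b))‖ := by
        congr 1
        ring
    _ ≤ ‖jointDesPGF m s t - desPGF m s * desPGF m t‖ +
          (‖desPGF m s - a‖ * ‖desPGF m t‖ + ‖a‖ * ‖desPGF m t - b‖) := by
        rw [← norm_mul, ← norm_mul]
        exact (norm_add_le _ _).trans (add_le_add_right (norm_add_le _ _) _)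
    _ ≤ Real.exp (|θ| * |η|) - 1 + (|θ| * 1 + 1 * |η|) := by
        gcongr
        exacts [norm_desPGF_cexp_sub_pow_le m θ, norm_desPGF_le_one m (hnorm η),
          norm_desPGF_cexp_sub_pow_le m η]
    _ = _ := by rw [mul_one, one_mul]

lemma abs_sinc_sub_le {x : ℝ} (hx : |x| ≤ 1) :
    |Real.sinc x - (1 - x ^ 2 / 6)| ≤ |x| ^ 4 / 100 := by
  obtain rfl | hx0 := eq_or_ne x 0
  · simp
  have hfactor : Real.sin x - (x - x ^ 3 / 6) = x * (Real.sinc x - (1 - x ^ 2 / 6)) := by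
    rw [Real.sinc_of_ne_zero hx0]
    field_simp
  have h := Real.sin_bound hx
  rw [hfactor, abs_mul] at h
  refine le_of_mul_le_mul_left (h.trans_eq ?_) (abs_pos.2 hx0)
  ring

lemma tendsto_sinc_pow {y : ℕ → ℝ} {c : ℝ}
    (hy : Tendsto (fun n : ℕ ↦ n * y n ^ 2) atTop (𝓝 c)) :
    Tendsto (fun n ↦ Real.sinc (y n) ^ n) atTop (𝓝 (Real.exp (-c / 6))) := by
  have hsq : Tendsto (fun n ↦ y n ^ 2) atTop (𝓝 0) := by
    refine (hy.div_atTop tendsto_natCast_atTop_atTop).congr' ?_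
    filter_upwards [eventually_gt_atTop 0] with n hn
    field_simp
  have hremainder : Tendsto (fun n : ℕ ↦ n * (Real.sinc (y n) - (1 - y n ^ 2 / 6))) atTop
      (𝓝 0) := by
    have hbound := (hy.mul hsq).div_const 100
    rw [mul_zero, zero_div] at hbound
    refine squeeze_zero_norm' ?_ hbound
    filter_upwards [hsq.eventually_lt_const one_pos] with n hn
    have hle := abs_sinc_sub_le ((sq_lt_one_iff_abs_lt_one _).1 hn).le
    rw [norm_mul, Real.norm_natCast, Real.norm_eq_abs, mul_assoc, mul_div_assoc]
    refine mul_le_mul_of_nonneg_left (hle.trans_eq ?_) n.cast_nonneg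
    rw [← sq_abs]
    ring
  have hlinear : Tendsto (fun n : ℕ ↦ n * (Real.sinc (y n) - 1)) atTop (𝓝 (-c / 6)) := by
    convert hremainder.add (hy.mul_const (-1 / 6)) using 2 <;> ring
  simpa using Real.tendsto_one_add_pow_exp_of_tendsto hlinear

lemma tendsto_sinc_div_sqrt_pow (x : ℝ) :
    Tendsto (fun n : ℕ ↦ Real.sinc (x / √((n + 1) / 12) / 2) ^ n) atTop
      (𝓝 (Real.exp (-x ^ 2 / 2))) := by
  rw [show -x ^ 2 / 2 = -(3 * x ^ 2 * 1) / 6 by ring]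
  refine tendsto_sinc_pow <|
    ((tendsto_natCast_div_add_atTop (1 : ℝ)).const_mul (3 * x ^ 2)).congr fun n ↦ ?_
  rw [div_pow, div_pow, Real.sq_sqrt (by positivity)]
  field_simp
  ring

/-- The characteristic function of the centered pair `(des π - (n - 1) / 2, des π⁻¹ - (n - 1) / 2)`
for a uniformly random `π : Perm (Fin n)`. -/
noncomputable def jointDesCharFun (n : ℕ) (θ η : ℝ) : ℂ :=
  (∑ π : Equiv.Perm (Fin n), Complex.exp
    ((θ * (des π - ((n : ℝ) - 1) / 2) + η * (des π⁻¹ - ((n : ℝ) - 1) / 2) : ℝ) * Complex.I)) / n !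

lemma jointDesCharFun_eq (n : ℕ) (θ η : ℝ) :
    jointDesCharFun n θ η =
      Complex.exp (((θ + η) * (-((n : ℝ) - 1) / 2) : ℝ) * Complex.I) *
        jointDesPGF n (Complex.exp (θ * Complex.I)) (Complex.exp (η * Complex.I)) := by
  rw [jointDesCharFun, jointDesPGF, mul_div_assoc', mul_sum]
  congr 1
  refine sum_congr rfl fun π _ ↦ ?_
  simp only [← Complex.exp_nat_mul, ← Complex.exp_add]
  congr 1
  push_cast
  ring

lemma norm_jointDesCharFun_sub_le (n : ℕ) (θ η : ℝ) :
    ‖jointDesCharFun n θ η - Complex.exp (((θ + η) / 2 : ℝ) * Complex.I) *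
      (Real.sinc (θ / 2) ^ n * Real.sinc (η / 2) ^ n : ℝ)‖ ≤
      Real.exp (|θ| * |η|) - 1 + (|θ| + |η|) := by
  have hphase : Complex.exp (((θ + η) / 2 : ℝ) * Complex.I) =
      Complex.exp (((θ + η) * (-((n : ℝ) - 1) / 2) : ℝ) * Complex.I) *
        (Complex.exp ((θ / 2 : ℝ) * Complex.I) ^ n *
          Complex.exp ((η / 2 : ℝ) * Complex.I) ^ n) := by
    simp only [← Complex.exp_nat_mul, ← Complex.exp_add]
    congr 1
    push_cast
    ring
  refine le_of_eq_of_le ?_ (norm_jointDesPGF_cexp_sub_pow_mul_pow_le n θ η)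
  rw [jointDesCharFun_eq, hphase, mul_assoc (Complex.exp _), ← mul_sub, norm_mul,
    Complex.norm_exp_ofReal_mul_I, one_mul, mul_pow, mul_pow, mul_mul_mul_comm]
  push_cast
  rfl

lemma tendsto_jointDesCharFun (θ η : ℝ) :
    Tendsto (fun n : ℕ ↦ jointDesCharFun n (θ / √((n + 1) / 12)) (η / √((n + 1) / 12))) atTop
      (𝓝 (Real.exp (-θ ^ 2 / 2) * Real.exp (-η ^ 2 / 2) : ℝ)) := by
  have hσ : Tendsto (fun n : ℕ ↦ √(((n : ℝ) + 1) / 12)) atTop atTop :=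
    Real.tendsto_sqrt_atTop.comp <| Tendsto.atTop_div_const (by norm_num) <|
      tendsto_atTop_add_const_right _ _ tendsto_natCast_atTop_atTop
  have hzero (x : ℝ) : Tendsto (fun n : ℕ ↦ x / √(((n : ℝ) + 1) / 12)) atTop (𝓝 0) :=
    hσ.const_div_atTop x
  have herror : Tendsto (fun n : ℕ ↦ Real.exp (|θ / √((n + 1) / 12)| * |η / √((n + 1) / 12)|) - 1 +
      (|θ / √((n + 1) / 12)| + |η / √((n + 1) / 12)|)) atTop (𝓝 0) := by
    have hθ := (hzero θ).abs
    have hη := (hzero η).abs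
    simpa using ((hθ.mul hη).rexp.sub_const 1).add (hθ.add hη)
  have hphase : Tendsto (fun n : ℕ ↦ Complex.exp
      (((θ / √((n + 1) / 12) + η / √((n + 1) / 12)) / 2 : ℝ) * Complex.I)) atTop (𝓝 1) := by
    have hsum : Tendsto (fun n : ℕ ↦ (θ / √((n + 1) / 12) + η / √((n + 1) / 12)) / 2) atTop
        (𝓝 0) := by
      simpa using ((hzero θ).add (hzero η)).div_const 2
    simpa using (hsum.ofReal.mul_const Complex.I).cexp
  have hmain := hphase.mul
    ((tendsto_sinc_div_sqrt_pow θ).mul (tendsto_sinc_div_sqrt_pow η)).ofReal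
  rw [one_mul] at hmain
  refine (tendsto_iff_of_dist ?_).2 hmain
  refine squeeze_zero (fun n ↦ dist_nonneg) (fun n ↦ ?_) herror
  rw [dist_eq_norm]
  exact norm_jointDesCharFun_sub_le n _ _

end CharacteristicFunctions

section WeakConvergence

open MeasureTheory ProbabilityTheory Filter
open scoped BoundedContinuousFunction RealInnerProductSpace

lemma integral_map_uniformOfFintype {Ω E F : Type*} [Fintype Ω] [Nonempty Ω] [TopologicalSpace E]
    [MeasurableSpace E] [OpensMeasurableSpace E] [NormedAddCommGroup F] [NormedSpace ℝ F]
    [CompleteSpace F] [SecondCountableTopologyEither E F] (X : Ω → E) {f : E → F}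
    (hf : Continuous f) :
    ∫ x, f x ∂((PMF.uniformOfFintype Ω).map X).toMeasure =
      (Fintype.card Ω : ℝ)⁻¹ • ∑ ω, f (X ω) := by
  let _ : MeasurableSpace Ω := ⊤
  rw [← PMF.toMeasure_map X _ measurable_from_top,
    integral_map measurable_from_top.aemeasurable hf.aestronglyMeasurable, PMF.integral_eq_sum,
    smul_sum]
  simp

lemma tendsto_average_of_tendsto_charFun {E : Type*} [NormedAddCommGroup E]
    [InnerProductSpace ℝ E] [FiniteDimensional ℝ E] [MeasurableSpace E] [BorelSpace E]
    {Ω : ℕ → Type*} [∀ n, Fintype (Ω n)] [∀ n, Nonempty (Ω n)] {X : ∀ n, Ω n → E}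
    {μ : Measure E} [IsProbabilityMeasure μ]
    (h : ∀ t, Tendsto (fun n ↦ (∑ ω, Complex.exp (⟪X n ω, t⟫ * Complex.I)) / Fintype.card (Ω n))
      atTop (𝓝 (charFun μ t)))
    (f : E →ᵇ ℝ) :
    Tendsto (fun n ↦ (∑ ω, f (X n ω)) / Fintype.card (Ω n)) atTop (𝓝 (∫ x, f x ∂μ)) := by
  have hlaw := ProbabilityMeasure.tendsto_of_tendsto_charFun
    (μ := fun n ↦ ⟨((PMF.uniformOfFintype (Ω n)).map (X n)).toMeasure, inferInstance⟩)
    (μ₀ := ⟨μ, inferInstance⟩) fun t ↦ by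
      refine (h t).congr fun n ↦ ?_
      rw [charFun_apply, ProbabilityMeasure.coe_mk,
        integral_map_uniformOfFintype _ (by fun_prop), div_eq_inv_mul, Complex.real_smul]
      push_cast
      rfl
  refine (ProbabilityMeasure.tendsto_iff_forall_integral_tendsto.1 hlaw f).congr fun n ↦ ?_
  rw [ProbabilityMeasure.coe_mk, integral_map_uniformOfFintype _ f.continuous, div_eq_inv_mul,
    smul_eq_mul]

lemma charFun_prod_gaussianReal_zero_one (t : WithLp 2 (ℝ × ℝ)) :
    charFun (((gaussianReal 0 1).prod (gaussianReal 0 1)).map (WithLp.toLp 2)) t =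
      (Real.exp (-t.fst ^ 2 / 2) * Real.exp (-t.snd ^ 2 / 2) : ℝ) := by
  rw [charFun_prod, charFun_gaussianReal, charFun_gaussianReal]
  simp [neg_div]

/-- The pair `(des π, des π⁻¹)`, each coordinate centered and scaled by its mean `(n - 1) / 2` and
standard deviation `√((n + 1) / 12)` under the uniform law. The plane carries its Euclidean norm,
so that characteristic functions are available. -/
noncomputable def normalizedDesPair {n : ℕ} (π : Equiv.Perm (Fin n)) : WithLp 2 (ℝ × ℝ) :=
  WithLp.toLp 2 (((des π : ℝ) - ((n : ℝ) - 1) / 2) / √((n + 1) / 12),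
    ((des π⁻¹ : ℝ) - ((n : ℝ) - 1) / 2) / √((n + 1) / 12))

lemma tendsto_average_cexp_inner_normalizedDesPair (t : WithLp 2 (ℝ × ℝ)) :
    Tendsto (fun n ↦ (∑ π : Equiv.Perm (Fin n),
        Complex.exp (⟪normalizedDesPair π, t⟫ * Complex.I)) / Fintype.card (Equiv.Perm (Fin n)))
      atTop (𝓝 (charFun (((gaussianReal 0 1).prod (gaussianReal 0 1)).map (WithLp.toLp 2)) t)) := by
  rw [charFun_prod_gaussianReal_zero_one]
  refine (tendsto_jointDesCharFun t.fst t.snd).congr fun n ↦ ?_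
  rw [jointDesCharFun, Fintype.card_perm, Fintype.card_fin]
  congr 1
  refine sum_congr rfl fun π _ ↦ ?_
  simp only [normalizedDesPair, WithLp.prod_inner_apply, Real.inner_apply]
  congr 3
  exact congrArg₂ _ (div_mul_comm ..) (div_mul_comm ..)

end WeakConvergence

/-- The pair of normalized descent counts `(des(π), des(π⁻¹))` of a uniformly random
permutation converges in distribution to a bivariate standard normal vector (mean zero,
identity covariance), i.e. to the product of two independent standard Gaussians:
expectations of bounded continuous test functions converge to the corresponding
Gaussian integral. -/
theorem descents_pair_bivariate_clt (f : BoundedContinuousFunction (ℝ × ℝ) ℝ) :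
    Filter.Tendsto
      (fun n : ℕ =>
        (∑ π : Equiv.Perm (Fin n),
            f (((des π : ℝ) - ((n : ℝ) - 1) / 2) / Real.sqrt (((n : ℝ) + 1) / 12),
               ((des π⁻¹ : ℝ) - ((n : ℝ) - 1) / 2) / Real.sqrt (((n : ℝ) + 1) / 12)))
          / (Nat.factorial n : ℝ))
      Filter.atTop
      (𝓝 (∫ p, f p ∂((ProbabilityTheory.gaussianReal 0 1).prod
          (ProbabilityTheory.gaussianReal 0 1)))) := by
  let γ := (ProbabilityTheory.gaussianReal 0 1).prod (ProbabilityTheory.gaussianReal 0 1)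
  have : MeasureTheory.IsProbabilityMeasure (γ.map (WithLp.toLp 2)) :=
    MeasureTheory.Measure.isProbabilityMeasure_map (by fun_prop)
  have hclt := tendsto_average_of_tendsto_charFun tendsto_average_cexp_inner_normalizedDesPair
    (f.compContinuous ⟨WithLp.ofLp, by fun_prop⟩)
  rw [MeasureTheory.integral_map (by fun_prop) (by fun_prop)] at hclt
  simpa [Fintype.card_perm, normalizedDesPair] using hclt
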